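/- Let Theta = [0, a_1, a_2, ...] in k((X^{-1})) with convergents (p_n/q_n). If a_1 a_2 ... a_n is a palindrome (i.e., a_i = a_{n+1-i} for all i), then ||q_{n-1} Theta^{-1}|| <= 2^{-deg q_{n-1}}, and consequently |q_{n-1}|^2 * ||q_{n-1} Theta|| * ||q_{n-1} Theta^{-1}|| <= 2^{-deg q_n + deg q_{n-1}} < 1. -/

import Mathlib

/-!
Write `α_i` for the complete quotients of `Θ = [0, a_1, a_2, …]`, so that `Θ⁻¹ = α_1`. The error
`q_n Θ - p_n` equals `± (α_1 ⋯ α_{n+1})⁻¹`, and `|α_i| = |a_i|`, so it has norm `1 / |q_{n+1}|`.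

The matrices `!![a_i, 1; 1, 0]`, whose product contains the convergents, are symmetric. Transposing
the product for a palindrome `a_1, …, a_n` therefore leaves it unchanged, which gives
`p_n = q_{n-1}`. Hence `q_{n-1} Θ⁻¹ - q_n = -(q_n Θ - p_n) Θ⁻¹` is an approximation of `q_{n-1} Θ⁻¹`
by a polynomial, with error of norm less than `|a_1| / |q_n| = |a_n| / |q_n| = 1 / |q_{n-1}|`.
-/

open Polynomial Filter

noncomputable section
open scoped Classical

namespace Littlewood

variable (k : Type*) [Field k]

/-- The element `X` of `k((X⁻¹))`: the inverse of the Laurent-series variable `t = X⁻¹`. -/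
def XLS : LaurentSeries k := (HahnSeries.single (1 : ℤ) (1 : k))⁻¹

variable {k}

/-- Embedding of `k[X]` into `k((X⁻¹))`, sending the polynomial variable to `X`. -/
def emb (p : Polynomial k) : LaurentSeries k := Polynomial.aeval (XLS k) p

/-- The degree of a Laurent series in `X⁻¹`: if `F = ∑_{h ≥ -m} f_h X^{-h}` with
`f_{-m} ≠ 0` then `deg F = m`. -/
def deg (F : LaurentSeries k) : ℤ := -F.order

/-- The norm `|F| = 2 ^ deg F`, with `|0| = 0`. -/
def lnorm (F : LaurentSeries k) : ℝ := if F = 0 then 0 else (2 : ℝ) ^ (deg F)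

/-- Fractional part: the part of the series comprising only negative powers of `X`. -/
def frac (F : LaurentSeries k) : LaurentSeries k where
  coeff n := if 1 ≤ n then F.coeff n else 0
  isPWO_support' := F.isPWO_support'.mono (fun n hn => by
    simp only [Function.mem_support] at hn ⊢
    intro h
    exact hn (by simp [h]))

/-- `‖F‖`: the norm of the fractional part of `F`. -/
def fnorm (F : LaurentSeries k) : ℝ := lnorm (frac F)

/-- `F` is a rational function. -/
def IsRat (F : LaurentSeries k) : Prop :=
  ∃ p q : Polynomial k, q ≠ 0 ∧ F * emb q = emb p

/-- The polynomial part of a Laurent series (the part with nonnegative powers of `X`). -/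
def polyPart (F : LaurentSeries k) : Polynomial k :=
  ∑ i ∈ Finset.range ((-F.order).toNat + 1), Polynomial.C (F.coeff (-(i : ℤ))) * Polynomial.X ^ i

/-- The complete quotients of the continued fraction algorithm applied to `F`. -/
def cfRem (F : LaurentSeries k) : ℕ → LaurentSeries k
  | 0 => F
  | n + 1 => (cfRem F n - emb (polyPart (cfRem F n)))⁻¹

/-- The partial quotients of the continued fraction expansion of `F`. -/
def pq (F : LaurentSeries k) (n : ℕ) : Polynomial k := polyPart (cfRem F n)

/-- Denominators `q_n` of the convergents of the continued fraction with
partial quotients `a`. -/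
def den (a : ℕ → Polynomial k) : ℕ → Polynomial k
  | 0 => 1
  | 1 => a 1
  | n + 2 => a (n + 2) * den a (n + 1) + den a n

/-- Numerators `p_n` of the convergents. -/
def num (a : ℕ → Polynomial k) : ℕ → Polynomial k
  | 0 => a 0
  | 1 => a 1 * a 0 + 1
  | n + 2 => a (n + 2) * num a (n + 1) + num a n

/-- The value of a finite continued fraction `[b_0, b_1, …, b_m]` over `k[X]`. -/
def finCF : List (Polynomial k) → LaurentSeries k
  | [] => 0
  | [b] => emb b
  | b :: l => emb b + (finCF l)⁻¹

/-- `F` is badly approximable. -/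
def Bad (F : LaurentSeries k) : Prop :=
  ∃ c : ℝ, 0 < c ∧ ∀ q : Polynomial k, q ≠ 0 → c ≤ lnorm (emb q) * fnorm (emb q * F)

theorem lnorm_zero : lnorm (0 : LaurentSeries k) = 0 := if_pos rfl

theorem lnorm_of_ne_zero {F : LaurentSeries k} (hF : F ≠ 0) : lnorm F = (2 : ℝ) ^ (-F.order) :=
  if_neg hF

theorem lnorm_pos {F : LaurentSeries k} (hF : F ≠ 0) : 0 < lnorm F := by
  rw [lnorm_of_ne_zero hF]
  positivity

theorem lnorm_one : lnorm (1 : LaurentSeries k) = 1 := by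
  simp [lnorm_of_ne_zero]

theorem lnorm_neg (F : LaurentSeries k) : lnorm (-F) = lnorm F := by
  simp [lnorm, deg]

theorem lnorm_mul (F G : LaurentSeries k) : lnorm (F * G) = lnorm F * lnorm G := by
  rcases eq_or_ne F 0 with rfl | hF
  · simp [lnorm_zero]
  rcases eq_or_ne G 0 with rfl | hG
  · simp [lnorm_zero]
  rw [lnorm_of_ne_zero hF, lnorm_of_ne_zero hG, lnorm_of_ne_zero (mul_ne_zero hF hG),
    HahnSeries.order_mul hF hG, neg_add, zpow_add₀ two_ne_zero]

theorem lnorm_inv (F : LaurentSeries k) : lnorm F⁻¹ = (lnorm F)⁻¹ := by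
  rcases eq_or_ne F 0 with rfl | hF
  · simp [lnorm_zero]
  · exact eq_inv_of_mul_eq_one_left (by rw [← lnorm_mul, inv_mul_cancel₀ hF, lnorm_one])

theorem lnorm_lt_one_iff {F : LaurentSeries k} : lnorm F < 1 ↔ ∀ m ≤ 0, F.coeff m = 0 := by
  rcases eq_or_ne F 0 with rfl | hF
  · simp [lnorm_zero]
  rw [lnorm_of_ne_zero hF, zpow_lt_one_iff_right₀ one_lt_two, neg_lt_zero,
    ← Int.add_one_le_iff, HahnSeries.le_order_iff_forall hF]
  simp only [Int.lt_add_one_iff]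

theorem emb_zero : emb (0 : k[X]) = 0 := map_zero (Polynomial.aeval (XLS k))

theorem ne_zero_of_not_isRat {F : LaurentSeries k} (hF : ¬ IsRat F) : F ≠ 0 := by
  rintro rfl
  exact hF ⟨0, 1, one_ne_zero, by rw [zero_mul, emb_zero]⟩

theorem emb_one : emb (1 : k[X]) = 1 := map_one (Polynomial.aeval (XLS k))

theorem emb_add (p q : k[X]) : emb (p + q) = emb p + emb q :=
  map_add (Polynomial.aeval (XLS k)) p q

theorem emb_mul (p q : k[X]) : emb (p * q) = emb p * emb q :=
  map_mul (Polynomial.aeval (XLS k)) p q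

theorem emb_monomial (i : ℕ) (c : k) :
    emb (Polynomial.monomial i c) = HahnSeries.single (-(i : ℤ)) c := by
  have hX : XLS k = HahnSeries.single (-1 : ℤ) (1 : k) := by
    simp [XLS, HahnSeries.inv_single]
  rw [emb, Polynomial.aeval_monomial, hX, HahnSeries.single_pow, LaurentSeries.algebraMap_apply,
    HahnSeries.C_apply, HahnSeries.single_mul_single]
  simp

theorem coeff_emb_neg (p : k[X]) (i : ℕ) : (emb p).coeff (-(i : ℤ)) = p.coeff i := by
  induction p using Polynomial.induction_on' with
  | add p q hp hq => simp [emb_add, hp, hq]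
  | monomial n c =>
    simp [emb_monomial, HahnSeries.coeff_single, Polynomial.coeff_monomial, eq_comm]

theorem coeff_emb_of_pos (p : k[X]) {m : ℤ} (hm : 0 < m) : (emb p).coeff m = 0 := by
  induction p using Polynomial.induction_on' with
  | add p q hp hq => simp [emb_add, hp, hq]
  | monomial n c =>
    rw [emb_monomial, HahnSeries.coeff_single_of_ne (by omega)]

theorem coeff_polyPart (F : LaurentSeries k) (i : ℕ) :
    (polyPart F).coeff i = F.coeff (-(i : ℤ)) := by
  simp only [polyPart, Polynomial.finsetSum_coeff, Polynomial.coeff_C_mul_X_pow,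
    Finset.sum_ite_eq, Finset.mem_range]
  split_ifs with hi
  · rfl
  · exact (HahnSeries.coeff_eq_zero_of_lt_order (by omega)).symm

theorem polyPart_emb (p : k[X]) : polyPart (emb p) = p := by
  ext i
  rw [coeff_polyPart, coeff_emb_neg]

theorem polyPart_eq_zero_iff {F : LaurentSeries k} : polyPart F = 0 ↔ lnorm F < 1 := by
  simp only [lnorm_lt_one_iff, Polynomial.ext_iff, coeff_polyPart, Polynomial.coeff_zero]
  refine ⟨fun h m hm => ?_, fun h i => h _ (by omega)⟩
  obtain ⟨i, rfl⟩ := Int.exists_eq_neg_ofNat hm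
  exact h i

theorem lnorm_eq_two_pow_natDegree_polyPart {F : LaurentSeries k} (hF : polyPart F ≠ 0) :
    lnorm F = 2 ^ (polyPart F).natDegree := by
  have hnorm : 1 ≤ lnorm F := not_lt.mp (polyPart_eq_zero_iff.not.mp hF)
  have hF0 : F ≠ 0 := by
    rintro rfl
    norm_num [lnorm_zero] at hnorm
  rw [lnorm_of_ne_zero hF0] at hnorm ⊢
  obtain ⟨d, hd⟩ := Int.exists_eq_neg_ofNat
    (neg_nonneg.mp ((one_le_zpow_iff_right₀ one_lt_two).mp hnorm))
  have hdeg : (polyPart F).natDegree = d := by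
    apply Polynomial.natDegree_eq_of_le_of_coeff_ne_zero
    · refine Polynomial.natDegree_le_iff_coeff_eq_zero.mpr fun i hi => ?_
      rw [coeff_polyPart, HahnSeries.coeff_eq_zero_of_lt_order (by omega)]
    · rw [coeff_polyPart, ← hd]
      exact HahnSeries.coeff_order_eq_zero.not.mpr hF0
  rw [hd, neg_neg, zpow_natCast, hdeg]

theorem lnorm_emb {p : k[X]} (hp : p ≠ 0) : lnorm (emb p) = 2 ^ p.natDegree := by
  rw [lnorm_eq_two_pow_natDegree_polyPart (by rwa [polyPart_emb]), polyPart_emb]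

theorem coeff_frac (F : LaurentSeries k) (m : ℤ) :
    (frac F).coeff m = if 1 ≤ m then F.coeff m else 0 := rfl

theorem fnorm_lt_one (F : LaurentSeries k) : fnorm F < 1 :=
  lnorm_lt_one_iff.mpr fun m hm => by rw [coeff_frac, if_neg (by omega)]

theorem frac_eq_sub_emb {F : LaurentSeries k} {p : k[X]} (h : lnorm (F - emb p) < 1) :
    frac F = F - emb p := by
  ext m
  rw [coeff_frac]
  split_ifs with hm
  · rw [HahnSeries.coeff_sub, coeff_emb_of_pos p (by omega), sub_zero]
  · rw [lnorm_lt_one_iff.mp h m (by omega)]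

theorem sub_emb_polyPart (F : LaurentSeries k) : F - emb (polyPart F) = frac F := by
  refine (frac_eq_sub_emb (lnorm_lt_one_iff.mpr fun m hm => ?_)).symm
  obtain ⟨i, rfl⟩ := Int.exists_eq_neg_ofNat hm
  rw [HahnSeries.coeff_sub, coeff_emb_neg, coeff_polyPart, sub_self]

theorem inv_cfRem_succ (F : LaurentSeries k) (n : ℕ) :
    (cfRem F (n + 1))⁻¹ = cfRem F n - emb (pq F n) :=
  inv_inv _

theorem cfRem_one_of_pq_zero {F : LaurentSeries k} (h0 : pq F 0 = 0) : cfRem F 1 = F⁻¹ := by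
  rw [← inv_inv (cfRem F 1), inv_cfRem_succ, h0, emb_zero, sub_zero, cfRem]

theorem lnorm_inv_cfRem_succ_lt_one (F : LaurentSeries k) (n : ℕ) :
    lnorm (cfRem F (n + 1))⁻¹ < 1 := by
  rw [inv_cfRem_succ, pq, sub_emb_polyPart]
  exact fnorm_lt_one _

theorem one_lt_lnorm_cfRem_succ {F : LaurentSeries k} {n : ℕ} (h : cfRem F (n + 1) ≠ 0) :
    1 < lnorm (cfRem F (n + 1)) := by
  have hinv := lnorm_inv_cfRem_succ_lt_one F n
  rwa [lnorm_inv, inv_lt_one₀ (lnorm_pos h)] at hinv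

theorem pq_succ_ne_zero_iff {F : LaurentSeries k} {n : ℕ} :
    pq F (n + 1) ≠ 0 ↔ cfRem F (n + 1) ≠ 0 := by
  refine ⟨mt fun h => ?_, fun h h0 => ?_⟩
  · rw [pq, h, polyPart_eq_zero_iff, lnorm_zero]
    exact one_pos
  · exact (one_lt_lnorm_cfRem_succ h).not_gt (polyPart_eq_zero_iff.mp h0)

theorem lnorm_cfRem_succ {F : LaurentSeries k} {n : ℕ} (h : cfRem F (n + 1) ≠ 0) :
    lnorm (cfRem F (n + 1)) = 2 ^ (pq F (n + 1)).natDegree :=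
  lnorm_eq_two_pow_natDegree_polyPart (pq_succ_ne_zero_iff.mpr h)

theorem natDegree_pq_succ_pos {F : LaurentSeries k} {n : ℕ} (h : cfRem F (n + 1) ≠ 0) :
    0 < (pq F (n + 1)).natDegree := by
  have hnorm := one_lt_lnorm_cfRem_succ h
  rw [lnorm_cfRem_succ h] at hnorm
  refine Nat.pos_of_ne_zero fun hdeg => ?_
  rw [hdeg, pow_zero] at hnorm
  exact lt_irrefl 1 hnorm

-- After the end of a finite expansion `cfRem` takes the junk value `0⁻¹ = 0`, so for
-- `1 ≤ n` the condition `cfRem F n ≠ 0` says that the expansion of `F` reaches index `n`.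
theorem cfRem_ne_zero_of_le {F : LaurentSeries k} {m n : ℕ} (hmn : m ≤ n)
    (h : cfRem F n ≠ 0) : cfRem F m ≠ 0 := by
  induction n, hmn using Nat.le_induction with
  | base => exact h
  | succ n _ ih =>
    refine ih fun h0 => h ?_
    have hpart : polyPart (0 : LaurentSeries k) = 0 := by
      simp [polyPart_eq_zero_iff, lnorm_zero]
    rw [cfRem, h0, hpart, emb_zero, sub_zero, inv_zero]

theorem natDegree_pq_pos_of_le {F : LaurentSeries k} {n : ℕ} (h : cfRem F (n + 1) ≠ 0) :
    ∀ i ≤ n, 0 < (pq F (i + 1)).natDegree :=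
  fun _ hi => natDegree_pq_succ_pos (cfRem_ne_zero_of_le (by omega) h)

theorem natDegree_den_succ {a : ℕ → k[X]} {n : ℕ}
    (ha : ∀ i ≤ n, 0 < (a (i + 1)).natDegree) :
    (den a (n + 1)).natDegree = (a (n + 1)).natDegree + (den a n).natDegree := by
  induction n with
  | zero => simp [den]
  | succ n ih =>
    have hdeg := ih fun i hi => ha i (by omega)
    have hpos := ha n (by omega)
    have hden : den a (n + 1) ≠ 0 := Polynomial.ne_zero_of_natDegree_gt (n := 0) (by omega)
    have hmul : (a (n + 2) * den a (n + 1)).natDegree =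
        (a (n + 2)).natDegree + (den a (n + 1)).natDegree :=
      Polynomial.natDegree_mul (Polynomial.ne_zero_of_natDegree_gt (ha (n + 1) le_rfl)) hden
    rw [den, Polynomial.natDegree_add_eq_left_of_natDegree_lt (by omega), hmul]

theorem natDegree_den_lt_succ {a : ℕ → k[X]} {n : ℕ}
    (ha : ∀ i ≤ n, 0 < (a (i + 1)).natDegree) :
    (den a n).natDegree < (den a (n + 1)).natDegree := by
  have hdeg := natDegree_den_succ ha
  have hpos := ha n le_rfl
  omega

theorem den_ne_zero {a : ℕ → k[X]} {n : ℕ} (ha : ∀ i < n, 0 < (a (i + 1)).natDegree) :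
    den a n ≠ 0 := by
  cases n with
  | zero => exact one_ne_zero
  | succ n =>
    exact Polynomial.ne_zero_of_natDegree_gt
      (natDegree_den_lt_succ fun i hi => ha i (Nat.lt_succ_of_le hi))

/-- The error `q_n F - p_n` of the `n`-th convergent of `F`. -/
def convErr (F : LaurentSeries k) (n : ℕ) : LaurentSeries k :=
  emb (den (pq F) n) * F - emb (num (pq F) n)

theorem convErr_zero (F : LaurentSeries k) : convErr F 0 = (cfRem F 1)⁻¹ := by
  rw [inv_cfRem_succ, convErr, den, num, emb_one, one_mul, cfRem]

theorem convErr_one (F : LaurentSeries k) :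
    convErr F 1 = emb (pq F 1) * (cfRem F 1)⁻¹ - 1 := by
  rw [inv_cfRem_succ, convErr, den, num, emb_add, emb_mul, emb_one, cfRem]
  ring

theorem convErr_add_two (F : LaurentSeries k) (n : ℕ) :
    convErr F (n + 2) = emb (pq F (n + 2)) * convErr F (n + 1) + convErr F n := by
  simp only [convErr, den, num, emb_add, emb_mul]
  ring

theorem convErr_succ {F : LaurentSeries k} {n : ℕ} (h : cfRem F (n + 1) ≠ 0) :
    convErr F (n + 1) = -convErr F n * (cfRem F (n + 2))⁻¹ := by
  induction n with
  | zero =>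
    rw [convErr_one, convErr_zero, inv_cfRem_succ F 1]
    field_simp
    ring
  | succ n ih =>
    have hprev := ih (cfRem_ne_zero_of_le (by omega) h)
    have herr : convErr F n = -convErr F (n + 1) * cfRem F (n + 2) := by
      rw [hprev]
      field_simp
    rw [convErr_add_two, herr, inv_cfRem_succ F (n + 2)]
    ring

theorem lnorm_convErr {F : LaurentSeries k} {n : ℕ} (h : cfRem F (n + 1) ≠ 0) :
    lnorm (convErr F n) = (2 ^ (den (pq F) (n + 1)).natDegree)⁻¹ := by
  induction n with
  | zero => rw [convErr_zero, lnorm_inv, lnorm_cfRem_succ h, den]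
  | succ n ih =>
    have hn : cfRem F (n + 1) ≠ 0 := cfRem_ne_zero_of_le (by omega) h
    rw [convErr_succ hn, lnorm_mul, lnorm_neg, ih hn, lnorm_inv, lnorm_cfRem_succ h, ← mul_inv,
      ← pow_add, natDegree_den_succ (natDegree_pq_pos_of_le h), add_comm]

theorem fnorm_emb_den_mul {F : LaurentSeries k} {n : ℕ} (h : cfRem F (n + 1) ≠ 0) :
    fnorm (emb (den (pq F) n) * F) = (2 ^ (den (pq F) (n + 1)).natDegree)⁻¹ := by
  have herr := lnorm_convErr h
  have hdeg := natDegree_den_lt_succ (natDegree_pq_pos_of_le h)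
  have hlt : lnorm (convErr F n) < 1 := by
    rw [herr]
    exact inv_lt_one_of_one_lt₀ (one_lt_pow₀ one_lt_two (by omega))
  rw [fnorm, frac_eq_sub_emb hlt]
  exact herr

/-- The matrix of one step of the recurrences for `num` and `den`. -/
def cfMatrix (b : k[X]) : Matrix (Fin 2) (Fin 2) k[X] := !![b, 1; 1, 0]

theorem cfMatrix_transpose (b : k[X]) : (cfMatrix b).transpose = cfMatrix b := by
  ext i j
  fin_cases i <;> fin_cases j <;> rfl

theorem transpose_prod_map_cfMatrix (l : List k[X]) :
    (l.map cfMatrix).prod.transpose = (l.reverse.map cfMatrix).prod := by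
  rw [Matrix.transpose_list_prod, List.map_map, List.map_reverse]
  congr 3
  exact funext cfMatrix_transpose

theorem prod_map_cfMatrix (a : ℕ → k[X]) (n : ℕ) :
    (((List.range (n + 2)).map a).map cfMatrix).prod =
      !![num a (n + 1), num a n; den a (n + 1), den a n] := by
  induction n with
  | zero => simp [List.range_succ, cfMatrix, num, den, mul_comm]
  | succ n ih =>
    rw [List.range_succ, List.map_append, List.map_append, List.prod_append, ih]
    simp [cfMatrix, num, den, mul_comm (a (n + 2))]

/-- The word `a 1, …, a n` is a palindrome; the entry `a 0` is not part of it. -/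
def IsPalindromicPrefix {α : Type*} (a : ℕ → α) (n : ℕ) : Prop :=
  ∀ i, 1 ≤ i → i ≤ n → a i = a (n + 1 - i)

namespace IsPalindromicPrefix

variable {F : LaurentSeries k} {n : ℕ}

theorem first_eq_last {α : Type*} {a : ℕ → α} (h : IsPalindromicPrefix a (n + 1)) :
    a 1 = a (n + 1) :=
  h 1 le_rfl (by omega)

theorem reverse_eq {α : Type*} {a : ℕ → α} (h : IsPalindromicPrefix a n) :
    ((List.range n).map fun i => a (i + 1)).reverse = (List.range n).map fun i => a (i + 1) := by
  refine List.ext_getElem (by simp) fun i hi _ => ?_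
  simp only [List.length_reverse, List.length_map, List.length_range] at hi
  simp only [List.getElem_reverse, List.getElem_map, List.getElem_range, List.length_map,
    List.length_range]
  rw [h (i + 1) (by omega) (by omega)]
  congr 1
  omega

theorem num_succ_eq {a : ℕ → k[X]} (h : IsPalindromicPrefix a (n + 1)) :
    num a (n + 1) = a 0 * den a (n + 1) + den a n := by
  set P := (((List.range (n + 1)).map fun i => a (i + 1)).map cfMatrix).prod with hP
  have hsymm : P 1 0 = P 0 1 := by
    have hT : P.transpose = P := by rw [hP, transpose_prod_map_cfMatrix, h.reverse_eq]
    exact congrFun (congrFun hT 0) 1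
  have hconv : cfMatrix (a 0) * P = !![num a (n + 1), num a n; den a (n + 1), den a n] := by
    rw [← prod_map_cfMatrix, List.range_succ_eq_map, List.map_cons, List.map_map, List.map_cons,
      List.prod_cons]
    rfl
  have hentry (i j : Fin 2) := congrFun (congrFun hconv i) j
  have hnum : a 0 * P 0 0 + P 1 0 = num a (n + 1) := by
    simpa [cfMatrix, Matrix.mul_apply] using hentry 0 0
  have hden : P 0 0 = den a (n + 1) := by
    simpa [cfMatrix, Matrix.mul_apply] using hentry 1 0
  have hden_prev : P 0 1 = den a n := by
    simpa [cfMatrix, Matrix.mul_apply] using hentry 1 1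
  rw [← hnum, hsymm, hden, hden_prev]

-- Since `a (n + 1) = a 1 ≠ 0`, a palindrome cannot reach beyond the end of a finite expansion.
theorem cfRem_ne_zero (h : IsPalindromicPrefix (pq F) (n + 1))
    (hF : cfRem F 1 ≠ 0) : cfRem F (n + 1) ≠ 0 :=
  pq_succ_ne_zero_iff.mp (h.first_eq_last ▸ pq_succ_ne_zero_iff.mpr hF)

theorem emb_den_mul_cfRem_one_sub
    (h : IsPalindromicPrefix (pq F) (n + 1)) (hF : cfRem F 1 ≠ 0) :
    emb (den (pq F) n) * cfRem F 1 - emb (den (pq F) (n + 1)) =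
      -convErr F (n + 1) * cfRem F 1 := by
  have herr : convErr F (n + 1) =
      emb (den (pq F) (n + 1)) * (cfRem F 1)⁻¹ - emb (den (pq F) n) := by
    rw [convErr, h.num_succ_eq, inv_cfRem_succ, emb_add, emb_mul, cfRem]
    ring
  rw [herr]
  field_simp
  ring

theorem lnorm_convErr_mul_cfRem_one_lt
    (h : IsPalindromicPrefix (pq F) (n + 1)) (hF : cfRem F 1 ≠ 0) :
    lnorm (convErr F (n + 1) * cfRem F 1) < (2 ^ (den (pq F) n).natDegree)⁻¹ := by
  have hlast := h.cfRem_ne_zero hF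
  have hdeg : (den (pq F) (n + 1)).natDegree = (pq F 1).natDegree + (den (pq F) n).natDegree := by
    rw [h.first_eq_last]
    exact natDegree_den_succ (natDegree_pq_pos_of_le hlast)
  calc lnorm (convErr F (n + 1) * cfRem F 1)
      = lnorm (convErr F n) * lnorm (cfRem F 1) * lnorm (cfRem F (n + 2))⁻¹ := by
        rw [convErr_succ hlast, lnorm_mul, lnorm_mul, lnorm_neg]
        ring
    _ = (2 ^ (den (pq F) n).natDegree)⁻¹ * lnorm (cfRem F (n + 2))⁻¹ := by
        rw [lnorm_convErr hlast, lnorm_cfRem_succ hF, hdeg, pow_add]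
        field_simp
    _ < (2 ^ (den (pq F) n).natDegree)⁻¹ :=
        mul_lt_of_lt_one_right (by positivity) (lnorm_inv_cfRem_succ_lt_one F (n + 1))

theorem fnorm_emb_den_mul_cfRem_one_lt
    (h : IsPalindromicPrefix (pq F) (n + 1)) (hF : cfRem F 1 ≠ 0) :
    fnorm (emb (den (pq F) n) * cfRem F 1) < (2 ^ (den (pq F) n).natDegree)⁻¹ := by
  have hlt : lnorm (emb (den (pq F) n) * cfRem F 1 - emb (den (pq F) (n + 1))) <
      (2 ^ (den (pq F) n).natDegree)⁻¹ := by
    rw [h.emb_den_mul_cfRem_one_sub hF, neg_mul, lnorm_neg]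
    exact h.lnorm_convErr_mul_cfRem_one_lt hF
  rw [fnorm, frac_eq_sub_emb (hlt.trans_le (inv_le_one_of_one_le₀ (one_le_pow₀ one_le_two)))]
  exact hlt

end IsPalindromicPrefix

theorem palindrome_prefix_littlewood_general (Θ : LaurentSeries k) (hΘ : Θ ≠ 0)
    (h0 : pq Θ 0 = 0) (n : ℕ) (hpal : IsPalindromicPrefix (pq Θ) (n + 1)) :
    fnorm (emb (den (pq Θ) n) * Θ⁻¹) ≤ (2 : ℝ) ^ (-((den (pq Θ) n).natDegree : ℤ)) ∧
      lnorm (emb (den (pq Θ) n)) ^ 2 * fnorm (emb (den (pq Θ) n) * Θ) *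
          fnorm (emb (den (pq Θ) n) * Θ⁻¹) ≤
        (2 : ℝ) ^ (((den (pq Θ) n).natDegree : ℤ) - ((den (pq Θ) (n + 1)).natDegree : ℤ)) ∧
      (2 : ℝ) ^ (((den (pq Θ) n).natDegree : ℤ) - ((den (pq Θ) (n + 1)).natDegree : ℤ)) < 1 := by
  have hinv : cfRem Θ 1 = Θ⁻¹ := cfRem_one_of_pq_zero h0
  have hfirst : cfRem Θ 1 ≠ 0 := hinv ▸ inv_ne_zero hΘ
  have hlast := hpal.cfRem_ne_zero hfirst
  have hpos := natDegree_pq_pos_of_le hlast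
  have hfnorm := (hinv ▸ hpal.fnorm_emb_den_mul_cfRem_one_lt hfirst).le
  refine ⟨by simpa using hfnorm, ?_,
    zpow_lt_one_of_neg₀ one_lt_two (by have := natDegree_den_lt_succ hpos; omega)⟩
  rw [lnorm_emb (den_ne_zero fun i hi => hpos i hi.le), fnorm_emb_den_mul hlast]
  refine (mul_le_mul_of_nonneg_left hfnorm (by positivity)).trans_eq ?_
  rw [zpow_sub₀ two_ne_zero, zpow_natCast, zpow_natCast]
  field_simp

theorem palindrome_prefix_littlewood {k : Type*} [Field k] (Θ : LaurentSeries k)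
    (hΘ : ¬ IsRat Θ) (hnorm : lnorm Θ ≤ 1 / 2) (h0 : pq Θ 0 = 0)
    (n : ℕ) (hn : 1 ≤ n)
    (hpal : ∀ i : ℕ, 1 ≤ i → i ≤ n → pq Θ i = pq Θ (n + 1 - i)) :
    fnorm (emb (den (pq Θ) (n - 1)) * Θ⁻¹) ≤
        (2 : ℝ) ^ (-((den (pq Θ) (n - 1)).natDegree : ℤ)) ∧
      lnorm (emb (den (pq Θ) (n - 1))) ^ 2 * fnorm (emb (den (pq Θ) (n - 1)) * Θ) *
          fnorm (emb (den (pq Θ) (n - 1)) * Θ⁻¹) ≤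
        (2 : ℝ) ^ (((den (pq Θ) (n - 1)).natDegree : ℤ) - ((den (pq Θ) n).natDegree : ℤ)) ∧
      (2 : ℝ) ^ (((den (pq Θ) (n - 1)).natDegree : ℤ) - ((den (pq Θ) n).natDegree : ℤ)) < 1 := by
  obtain ⟨m, rfl⟩ := Nat.exists_eq_add_of_le' hn
  exact palindrome_prefix_littlewood_general Θ (ne_zero_of_not_isRat hΘ) h0 m hpal

end Littlewood
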